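/- For every index k, every t ∈ ℝ and every g ∈ ℝ^N, the magnetizations of the interpolated model satisfy the transport equation ∂m_k/∂t (t,g) = m_1(t,g) · Σ_{j=1}^N J_{1j} ∂m_k/∂g_j (t,g) + Σ_{j=1}^N J_{1j} ∂²m_k/∂g_1∂g_j (t,g) + (Σ_{j=1}^N J_{1j} m_j(t,g)) · ∂m_k/∂g_1 (t,g). -/

import Mathlib

/-!
Write `⟨X⟩` for the Gibbs average with weights `exp (U s)`. Everything rests on one identity: if the
exponent `U` depends differentiably on a parameter, then along a direction `u`
`∂⟨X⟩ = ⟨X · ∂U⟩ - ⟨X⟩ ⟨∂U⟩` (`fderiv_gibbs`).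
(The distinguished spin `σ₁` is `σ 0` in the code.) The exponent `-H` has `t`-derivative `σ₁ ∑ⱼ J₁ⱼ σⱼ` and `gⱼ`-derivative `σⱼ`. Hence
`∂ₜ m_k = ∑ⱼ J₁ⱼ (⟨σ_k σ₁ σⱼ⟩ - ⟨σ_k⟩ ⟨σ₁ σⱼ⟩)`, while
`∂ⱼ m_k = ⟨σ_k σⱼ⟩ - ⟨σ_k⟩ ⟨σⱼ⟩`, and differentiating this once more in `g₁` gives the triple
cumulant of `σ_k, σ₁, σⱼ`. The two first-order terms on the right-hand side cancel exactly the parts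
of the cumulant other than `⟨σ_k σ₁ σⱼ⟩ - ⟨σ_k⟩ ⟨σ₁ σⱼ⟩`, term by term in `j`.
-/

/-- Partial derivative of a function of `g ∈ ℝ^N` in the coordinate direction `j`. -/
noncomputable def pderiv' {N : ℕ} (F : (Fin N → ℝ) → ℝ) (j : Fin N) (g : Fin N → ℝ) : ℝ :=
  fderiv ℝ F g (Pi.single j 1)

/-- The Gibbs average of the observable `X` on a finite state space, with weights `exp (U s)`
(so `U` is minus the Hamiltonian). -/
noncomputable def gibbs {S : Type*} [Fintype S] (U X : S → ℝ) : ℝ :=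
  (∑ s, X s * Real.exp (U s)) / (∑ s, Real.exp (U s))

section Gibbs

variable {S : Type*} [Fintype S]

lemma gibbs_sum_mul {ι : Type*} [Fintype ι] (U : S → ℝ) (c : ι → ℝ) (X : ι → S → ℝ) :
    gibbs U (fun s => ∑ j, c j * X j s) = ∑ j, c j * gibbs U (X j) := by
  simp only [gibbs, mul_div_assoc', ← Finset.sum_div, Finset.mul_sum, Finset.sum_mul]
  rw [Finset.sum_comm]
  simp only [mul_assoc]

variable [Nonempty S] {V : Type*} [NormedAddCommGroup V] [NormedSpace ℝ V]

lemma hasFDerivAt_gibbs (X : S → ℝ) (U : V → S → ℝ) (L : S → V →L[ℝ] ℝ) (v : V)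
    (h : ∀ s, HasFDerivAt (fun w => U w s) (L s) v) :
    ∃ D : V →L[ℝ] ℝ, HasFDerivAt (fun w => gibbs (U w) X) D v ∧
      ∀ u, D u = gibbs (U v) (fun s => X s * L s u)
        - gibbs (U v) X * gibbs (U v) (fun s => L s u) := by
  have hZ : (∑ s, Real.exp (U v s)) ≠ 0 :=
    (Finset.sum_pos (fun s _ => Real.exp_pos _) Finset.univ_nonempty).ne'
  have h1 := HasFDerivAt.fun_sum (u := Finset.univ) fun s _ => ((h s).exp).const_mul (X s)
  have h2 := HasFDerivAt.fun_sum (u := Finset.univ) fun s _ => (h s).exp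
  refine ⟨_, h1.fun_mul ((hasDerivAt_inv hZ).comp_hasFDerivAt v h2), fun u => ?_⟩
  have e1 : ∑ s, X s * (Real.exp (U v s) * L s u) = ∑ s, X s * L s u * Real.exp (U v s) :=
    Finset.sum_congr rfl fun s _ => by ring
  have e2 : ∑ s, Real.exp (U v s) * L s u = ∑ s, L s u * Real.exp (U v s) :=
    Finset.sum_congr rfl fun s _ => by ring
  simp [sum_apply, e1, e2, gibbs]
  field_simp
  ring

lemma differentiableAt_gibbs (X : S → ℝ) (U : V → S → ℝ) (L : S → V →L[ℝ] ℝ) (v : V)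
    (h : ∀ s, HasFDerivAt (fun w => U w s) (L s) v) :
    DifferentiableAt ℝ (fun w => gibbs (U w) X) v :=
  let ⟨_, hD, _⟩ := hasFDerivAt_gibbs X U L v h
  hD.differentiableAt

/-- The derivative of a Gibbs average is the covariance of the observable with the derivative of
the exponent. -/
lemma fderiv_gibbs (X : S → ℝ) (U : V → S → ℝ) (L : S → V →L[ℝ] ℝ) (v : V)
    (h : ∀ s, HasFDerivAt (fun w => U w s) (L s) v) (u : V) :
    fderiv ℝ (fun w => gibbs (U w) X) v u = gibbs (U v) (fun s => X s * L s u)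
        - gibbs (U v) X * gibbs (U v) (fun s => L s u) := by
  obtain ⟨D, hD, hu⟩ := hasFDerivAt_gibbs X U L v h
  rw [hD.fderiv, hu]

end Gibbs

/-- **Transport equation (2.2).** The magnetizations of the interpolated model satisfy
`∂m_k/∂t = m_1 ∑_j J_{1j} ∂m_k/∂g_j + ∑_j J_{1j} ∂²m_k/∂g_1∂g_j
  + (∑_j J_{1j} m_j) ∂m_k/∂g_1`. -/
theorem interpolated_transport_equation
    (N : ℕ) [NeZero N]
    (J : Matrix (Fin N) (Fin N) ℝ)
    (hJsym : ∀ i j, J i j = J j i)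
    (hJnonneg : ∀ i j, 0 ≤ J i j)
    (spin : Bool → ℝ) (hspin : spin = fun b => if b then 1 else -1)
    (H : ℝ → (Fin N → ℝ) → (Fin N → Bool) → ℝ)
    (hH : ∀ t g σ, H t g σ =
      -t * spin (σ 0) * (∑ i, J 0 i * spin (σ i))
      - (1/2) * (∑ i ∈ Finset.univ.filter (fun i => i ≠ (0 : Fin N)),
          ∑ j ∈ Finset.univ.filter (fun j => j ≠ (0 : Fin N)),
            J i j * spin (σ i) * spin (σ j))
      - ∑ i, g i * spin (σ i))
    (m : ℝ → (Fin N → ℝ) → Fin N → ℝ)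
    (hm : ∀ t g k, m t g k =
      (∑ σ : Fin N → Bool, spin (σ k) * Real.exp (-H t g σ)) /
      (∑ σ : Fin N → Bool, Real.exp (-H t g σ)))
    (k : Fin N) (t : ℝ) (g : Fin N → ℝ) :
    deriv (fun r => m r g k) t =
      m t g 0 * (∑ j, J 0 j * pderiv' (fun g' => m t g' k) j g)
      + (∑ j, J 0 j * pderiv' (pderiv' (fun g' => m t g' k) j) 0 g)
      + (∑ j, J 0 j * m t g j) * pderiv' (fun g' => m t g' k) 0 g := by
  have hm' : ∀ t g k, m t g k = gibbs (fun σ => -H t g σ) (fun σ => spin (σ k)) := hm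
  -- The two partial derivatives of the exponent `-H`.
  have hUt : ∀ σ, HasFDerivAt (fun r => -H r g σ)
      (ContinuousLinearMap.toSpanSingleton ℝ (∑ j, J 0 j * (spin (σ 0) * spin (σ j)))) t := by
    intro σ
    apply HasDerivAt.hasFDerivAt
    simp only [hH]
    have := (((((hasDerivAt_id t).neg.mul_const (spin (σ 0))).mul_const
      (∑ i, J 0 i * spin (σ i))).sub_const ((1/2) * (∑ i ∈ Finset.univ.filter
        (fun i => i ≠ (0 : Fin N)), ∑ j ∈ Finset.univ.filter (fun j => j ≠ (0 : Fin N)),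
            J i j * spin (σ i) * spin (σ j)))).sub_const (∑ i, g i * spin (σ i))).neg
    refine this.congr_deriv ?_
    rw [neg_one_mul, neg_mul, neg_neg, Finset.mul_sum]
    exact Finset.sum_congr rfl fun j _ => by ring
  let L : (Fin N → Bool) → (Fin N → ℝ) →L[ℝ] ℝ :=
    fun σ => ∑ i, spin (σ i) • ContinuousLinearMap.proj (R := ℝ) (φ := fun _ : Fin N => ℝ) i
  have hL : ∀ σ j, L σ (Pi.single j 1) = spin (σ j) := by
    intro σ j
    simp [L, Pi.single_apply]
  have hUg : ∀ g σ, HasFDerivAt (fun g' => -H t g' σ) (L σ) g := by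
    intro g σ
    have h := ((L σ).hasFDerivAt (x := g)).add_const (-H t 0 σ)
    refine h.congr_of_eventuallyEq (Filter.Eventually.of_forall fun g' => ?_)
    simp only [hH, L, sum_apply, smul_apply,
      ContinuousLinearMap.proj_apply, smul_eq_mul, Pi.zero_apply, zero_mul,
      Finset.sum_const_zero, mul_comm (spin _) (g' _)]
    ring
  have hdiff : ∀ X : (Fin N → Bool) → ℝ, ∀ g,
      DifferentiableAt ℝ (fun g' => gibbs (fun σ => -H t g' σ) X) g :=
    fun X g => differentiableAt_gibbs X (fun g' σ => -H t g' σ) L g (hUg g)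
  have hp : ∀ X : (Fin N → Bool) → ℝ, ∀ j g,
      fderiv ℝ (fun g' => gibbs (fun σ => -H t g' σ) X) g (Pi.single j 1) =
        gibbs (fun σ => -H t g σ) (fun σ => X σ * spin (σ j))
        - gibbs (fun σ => -H t g σ) X * gibbs (fun σ => -H t g σ) (fun σ => spin (σ j)) := by
    intro X j g
    rw [fderiv_gibbs X (fun g' σ => -H t g' σ) L g (hUg g)]
    simp only [hL]
  have hp1 : ∀ j, pderiv' (fun g' => m t g' k) j = fun g =>
      gibbs (fun σ => -H t g σ) (fun σ => spin (σ k) * spin (σ j))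
        - gibbs (fun σ => -H t g σ) (fun σ => spin (σ k))
          * gibbs (fun σ => -H t g σ) (fun σ => spin (σ j)) := by
    intro j
    funext g
    simp only [pderiv', hm', hp]
  have hp2 : ∀ j, pderiv' (pderiv' (fun g' => m t g' k) j) 0 g =
      (gibbs (fun σ => -H t g σ) (fun σ => spin (σ k) * spin (σ j) * spin (σ 0))
        - gibbs (fun σ => -H t g σ) (fun σ => spin (σ k) * spin (σ j)) * m t g 0)
      - (m t g k * (gibbs (fun σ => -H t g σ) (fun σ => spin (σ j) * spin (σ 0))
          - m t g j * m t g 0)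
        + m t g j * (gibbs (fun σ => -H t g σ) (fun σ => spin (σ k) * spin (σ 0))
          - m t g k * m t g 0)) := by
    intro j
    rw [hp1, pderiv', fderiv_fun_sub (hdiff _ g) ((hdiff _ g).fun_mul (hdiff _ g)),
      fderiv_fun_mul (hdiff _ g) (hdiff _ g)]
    simp only [sub_apply, add_apply,
      smul_apply, smul_eq_mul, hp, hm']
  have ht : deriv (fun r => m r g k) t =
      ∑ j, J 0 j * gibbs (fun σ => -H t g σ) (fun σ => spin (σ k) * (spin (σ 0) * spin (σ j)))
      - m t g k * ∑ j, J 0 j * gibbs (fun σ => -H t g σ) (fun σ => spin (σ 0) * spin (σ j)) := by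
    simp only [hm']
    rw [← fderiv_apply_one_eq_deriv,
      fderiv_gibbs (fun σ => spin (σ k)) (fun r σ => -H r g σ) _ t hUt, ← gibbs_sum_mul,
      ← gibbs_sum_mul]
    simp only [ContinuousLinearMap.toSpanSingleton_apply, one_smul, Finset.mul_sum,
      mul_left_comm (spin _) (J _ _)]
  have c1 : ∀ j, (fun σ : Fin N → Bool => spin (σ k) * (spin (σ 0) * spin (σ j))) =
      fun σ => spin (σ k) * spin (σ j) * spin (σ 0) := fun j => by funext σ; ring
  have c2 : ∀ j, (fun σ : Fin N → Bool => spin (σ 0) * spin (σ j)) =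
      fun σ => spin (σ j) * spin (σ 0) := fun j => by funext σ; ring
  rw [ht]
  simp only [hp2, c1, c2]
  simp only [hp1, ← hm', Finset.mul_sum, Finset.sum_mul, ← Finset.sum_add_distrib,
    ← Finset.sum_sub_distrib]
  exact Finset.sum_congr rfl fun j _ => by ring
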